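/- Let q be an odd prime power, F_q the finite field with q elements, and χ the quadratic character of F_q (χ(u) = 1 if u is a nonzero square, χ(u) = -1 if u is a nonsquare, χ(0) = 0). Let a, b, c, A, B, C, D ∈ F_q with c ≠ 0 and A ≠ 0, and define g(x) = x³ + a x² + b x + c, h(x) = (A−1) x³ + B x² + C x + D, and D_T(x) = g(x)² + x³ h(x). Suppose D_T(x) = A·∏_{i=1}^{6} (x − ρ_i) where ρ_1, …, ρ_6 are six distinct elements of F_q, each of which is a nonzero square in F_q. Then ∑_{x ∈ F_q} ∑_{t ∈ F_q} χ(x³ t² + 2 g(x) t − h(x)) = 6q. -/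

import Mathlib

/-- A sum over squares, grouped by the value of the square. -/
lemma sum_comp_sq_eq_sum_quadraticChar {F : Type*} [Field F] [Fintype F] [DecidableEq F]
    (hF : ringChar F ≠ 2) (f : F → ℤ) :
    ∑ t : F, f (t ^ 2) = ∑ u : F, (quadraticChar F u + 1) * f u := by
  rw [← Finset.sum_fiberwise (s := Finset.univ) (g := fun t : F => t ^ 2)]
  refine Finset.sum_congr rfl fun u _ => ?_
  rw [← quadraticChar_card_sqrts hF u, Finset.sum_congr rfl (g := fun _ => f u)]
  · rw [Finset.sum_const, nsmul_eq_mul]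
    congr 3
    ext t
    simp
  · intro t ht
    rw [(Finset.mem_filter.mp ht).2]

lemma sum_quadraticChar_sq_sub {F : Type*} [Field F] [Fintype F] [DecidableEq F]
    (hF : ringChar F ≠ 2) {d : F} (hd : d ≠ 0) :
    ∑ t : F, quadraticChar F (t ^ 2 - d) = -1 := by
  rw [sum_comp_sq_eq_sum_quadraticChar hF fun u => quadraticChar F (u - d)]
  simp only [add_mul, one_mul, Finset.sum_add_distrib]
  have hshift : ∑ u : F, quadraticChar F (u - d) = 0 :=
    ((Equiv.subRight d).sum_comp fun u => quadraticChar F u).trans (quadraticChar_sum_zero hF)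
  have hjac := jacobiSum_nontrivial_inv (quadraticChar_ne_one hF)
  rw [(quadraticChar_isQuadratic F).inv, jacobiSum] at hjac
  have hneg : quadraticChar F (-1) ^ 2 = 1 := quadraticChar_sq_one (by simp)
  have hd2 : quadraticChar F d ^ 2 = 1 := quadraticChar_sq_one hd
  rw [hshift, add_zero,
    ← Equiv.sum_comp (Equiv.mulLeft₀ d hd) fun u => quadraticChar F u * quadraticChar F (u - d)]
  calc ∑ v : F, quadraticChar F (d * v) * quadraticChar F (d * v - d)
      = quadraticChar F (-1) * ∑ v : F, quadraticChar F v * quadraticChar F (1 - v) := by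
        rw [Finset.mul_sum]
        refine Finset.sum_congr rfl fun v _ => ?_
        rw [show d * v - d = d * (-1 * (1 - v)) by ring]
        simp only [map_mul]
        linear_combination quadraticChar F v * quadraticChar F (-1) *
          quadraticChar F (1 - v) * hd2
    _ = -1 := by
        rw [hjac]
        linear_combination -hneg

lemma sum_quadraticChar_sq_sub_eq_ite {F : Type*} [Field F] [Fintype F] [DecidableEq F]
    (hF : ringChar F ≠ 2) (d : F) :
    ∑ t : F, quadraticChar F (t ^ 2 - d) =
      (if d = 0 then (Fintype.card F : ℤ) else 0) - 1 := by
  split_ifs with hd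
  · subst hd
    have hsq (t : F) : quadraticChar F (t ^ 2 - 0) = 1 - if t = 0 then 1 else 0 := by
      split_ifs with ht
      · simp [ht]
      · rw [sub_zero, quadraticChar_sq_one' ht, sub_zero]
    rw [Finset.sum_congr rfl fun t _ => hsq t]
    simp
  · rw [sum_quadraticChar_sq_sub hF hd, zero_sub]

/-- The character sum of `u t² + 2 v t - w` in terms of its reduced discriminant `v² + u w`. -/
lemma sum_quadraticChar_quadratic {F : Type*} [Field F] [Fintype F] [DecidableEq F]
    (hF : ringChar F ≠ 2) {u : F} (hu : u ≠ 0) (v w : F) :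
    ∑ t : F, quadraticChar F (u * t ^ 2 + 2 * v * t - w) =
      quadraticChar F u * ((if v ^ 2 + u * w = 0 then (Fintype.card F : ℤ) else 0) - 1) := by
  have hu2 : quadraticChar F u ^ 2 = 1 := quadraticChar_sq_one hu
  rw [← sum_quadraticChar_sq_sub_eq_ite hF (v ^ 2 + u * w),
    ← ((Equiv.mulLeft₀ u hu).trans (Equiv.addRight v)).sum_comp
      fun s => quadraticChar F (s ^ 2 - (v ^ 2 + u * w)), Finset.mul_sum]
  refine Finset.sum_congr rfl fun t _ => ?_
  change _ = _ * quadraticChar F ((u * t + v) ^ 2 - _)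
  rw [show (u * t + v) ^ 2 - (v ^ 2 + u * w) = u * (u * t ^ 2 + 2 * v * t - w) by ring, map_mul]
  linear_combination -quadraticChar F (u * t ^ 2 + 2 * v * t - w) * hu2

lemma sum_quadraticChar_linear {F : Type*} [Field F] [Fintype F] [DecidableEq F]
    (hF : ringChar F ≠ 2) {u : F} (hu : u ≠ 0) (w : F) :
    ∑ t : F, quadraticChar F (u * t - w) = 0 :=
  (((Equiv.mulLeft₀ u hu).trans (Equiv.subRight w)).sum_comp
    fun s => quadraticChar F s).trans (quadraticChar_sum_zero hF)


/-- **Character-sum computation for the rank-6 family.**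
Let `q` be an odd prime power and `F` the finite field with `q` elements, with
quadratic character `quadraticChar F`.  Given `a b c A B C D : F` with `c ≠ 0`
and `A ≠ 0`, set `g x = x³ + a x² + b x + c`,
`h x = (A - 1) x³ + B x² + C x + D` and `D_T x = (g x)² + x³ * h x`.  If
`D_T x = A * ∏ i, (x - ρ i)` for six distinct `ρ 1, …, ρ 6 ∈ F`, each a nonzero
square in `F`, then `∑ x, ∑ t, χ(x³ t² + 2 g(x) t − h(x)) = 6 q`. -/
theorem legendre_sum_rank_six_family (q : ℕ) (hq : Odd q)
    (F : Type*) [Field F] [Fintype F] [DecidableEq F] (hcard : Fintype.card F = q)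
    (a b c A B C D : F) (hc : c ≠ 0) (hA : A ≠ 0)
    (g h : F → F)
    (hg : ∀ x, g x = x ^ 3 + a * x ^ 2 + b * x + c)
    (hh : ∀ x, h x = (A - 1) * x ^ 3 + B * x ^ 2 + C * x + D)
    (ρ : Fin 6 → F) (hinj : Function.Injective ρ)
    (hρ : ∀ i, ρ i ≠ 0 ∧ IsSquare (ρ i))
    (hDT : ∀ x, (g x) ^ 2 + x ^ 3 * h x = A * ∏ i, (x - ρ i)) :
    ∑ x : F, ∑ t : F, quadraticChar F (x ^ 3 * t ^ 2 + 2 * g x * t - h x) = 6 * q := by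
  have hF : ringChar F ≠ 2 := by
    intro h2
    have := FiniteField.even_card_of_char_two h2
    rw [hcard] at this
    have := Nat.odd_iff.mp hq
    omega
  have hcard' : (Fintype.card F : ℤ) = q := by rw [hcard]
  have hroot (x : F) : g x ^ 2 + x ^ 3 * h x = 0 ↔ x ∈ Finset.univ.image ρ := by
    rw [hDT, mul_eq_zero, or_iff_right hA, Finset.prod_eq_zero_iff]
    simp [sub_eq_zero, eq_comm]
  have hinner (x : F) : ∑ t : F, quadraticChar F (x ^ 3 * t ^ 2 + 2 * g x * t - h x) =
      (if x ∈ Finset.univ.image ρ then (q : ℤ) * quadraticChar F x else 0) -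
        quadraticChar F x := by
    rcases eq_or_ne x 0 with rfl | hx
    · have hgc : 2 * g 0 ≠ 0 := mul_ne_zero (Ring.two_ne_zero hF) (by simpa [hg] using hc)
      simpa using sum_quadraticChar_linear hF hgc (h 0)
    · have hx3 : quadraticChar F (x ^ 3) = quadraticChar F x := by
        rw [pow_succ, map_mul, quadraticChar_sq_one' hx, one_mul]
      rw [sum_quadraticChar_quadratic hF (pow_ne_zero 3 hx), hx3, hcard']
      simp only [hroot]
      split_ifs <;> ring
  have hone (i : Fin 6) : quadraticChar F (ρ i) = 1 :=
    (quadraticChar_one_iff_isSquare (hρ i).1).mpr (hρ i).2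
  simp only [hinner, Finset.sum_sub_distrib, quadraticChar_sum_zero hF, sub_zero]
  rw [Finset.sum_ite_mem, Finset.univ_inter, Finset.sum_image hinj.injOn]
  simp [hone]
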